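/- There exists a policy π whose feasible region equals the maximum feasible region, i.e., X^π = X*; in particular the set Π* = {π : X^π = X*} is nonempty. -/

import Mathlib

/-!
`Xstar` is control invariant: if a policy `π` keeps the trajectory from `x` feasible, the same `π`
keeps its tail, the trajectory from `f x (π x)`, feasible, so the action `π x` leads from `x` back
into `Xstar`. Choosing such an action at each state of `Xstar` glues the policies, which a priori
depend on the initial state, into a single one whose trajectories never leave `Xstar`; and
`h ≤ 0` holds on `Xstar`.
-/

open scoped Classical

variable {X U : Type*}

/-- Trajectory from `x` under policy `π`: `x₀ = x`, `x_{t+1} = f xₜ (π xₜ)`. -/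
def traj (f : X → U → X) (π : X → U) (x : X) : ℕ → X
  | 0 => x
  | t + 1 => f (traj f π x t) (π (traj f π x t))

/-- Constraint indicator: `c(x) = 1` if `h x > 0`, else `0`. -/
noncomputable def cInd (h : X → ℝ) (x : X) : ℝ := if h x > 0 then 1 else 0

/-- Constraint decay function `F^π(x) = γ ^ (N^π x)` with `γ ^ ∞ := 0`,
where `N^π x` is the least `t` with `h (xₜ) > 0` along the trajectory. -/
noncomputable def Fcdf (f : X → U → X) (h : X → ℝ) (γ : ℝ) (π : X → U) (x : X) : ℝ :=
  if hx : ∃ t, h (traj f π x t) > 0 then γ ^ Nat.find hx else 0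

/-- Feasible region of a policy `π`. -/
def Xfeas (f : X → U → X) (h : X → ℝ) (π : X → U) : Set X :=
  {x | ∀ t, h (traj f π x t) ≤ 0}

/-- Maximum feasible region. -/
def Xstar (f : X → U → X) (h : X → ℝ) : Set X :=
  {x | ∃ π : X → U, x ∈ Xfeas f h π}

/-- Optimal constraint decay function: infimum of `F^π` over all policies. -/
noncomputable def Fstar (f : X → U → X) (h : X → ℝ) (γ : ℝ) (x : X) : ℝ :=
  ⨅ π : X → U, Fcdf f h γ π x

/-- State-value function of a policy. -/
noncomputable def Vval (f : X → U → X) (r : X → U → ℝ) (γ : ℝ) (π : X → U) (x : X) : ℝ :=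
  ∑' t : ℕ, γ ^ t * r (traj f π x t) (π (traj f π x t))

/-- Optimal state-value function: max of `V^π` over policies whose feasible
region equals the maximum feasible region. -/
noncomputable def Vstar (f : X → U → X) (h : X → ℝ) (r : X → U → ℝ) (γ : ℝ) (x : X) : ℝ :=
  ⨆ π : {π : X → U // Xfeas f h π = Xstar f h}, Vval f r γ π.1 x

lemma traj_succ_start (f : X → U → X) (π : X → U) (x : X) (t : ℕ) :
    traj f π x (t + 1) = traj f π (f x (π x)) t := by
  induction t with
  | zero => rfl
  | succ t ih =>
    rw [traj, ih, traj]

/-- `Xstar` is control invariant. -/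
lemma exists_action_mem_Xstar (f : X → U → X) (h : X → ℝ) {x : X} (hx : x ∈ Xstar f h) :
    ∃ u, f x u ∈ Xstar f h := by
  obtain ⟨π, hπ⟩ := hx
  refine ⟨π x, π, fun t => ?_⟩
  rw [← traj_succ_start]
  exact hπ (t + 1)

lemma h_nonpos_of_mem_Xstar (f : X → U → X) (h : X → ℝ) {x : X} (hx : x ∈ Xstar f h) :
    h x ≤ 0 := by
  obtain ⟨π, hπ⟩ := hx
  exact hπ 0

/-- there exists a policy whose feasible region is the maximum
feasible region; i.e. `Π* = {π : X^π = X*}` is nonempty. -/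
theorem exists_policy_with_max_feasible_region [Nonempty U]
    (f : X → U → X) (h : X → ℝ) :
    ∃ π : X → U, Xfeas f h π = Xstar f h := by
  have key : ∀ x, ∃ u, x ∈ Xstar f h → f x u ∈ Xstar f h := fun x => by
    by_cases hx : x ∈ Xstar f h
    · obtain ⟨u, hu⟩ := exists_action_mem_Xstar f h hx
      exact ⟨u, fun _ => hu⟩
    · exact ⟨Classical.arbitrary U, fun hx' => absurd hx' hx⟩
  choose π hπ using key
  refine ⟨π, Set.Subset.antisymm (fun x hx => ⟨π, hx⟩) fun x hx t => ?_⟩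
  have mem : traj f π x t ∈ Xstar f h := by
    induction t with
    | zero => exact hx
    | succ t ih => exact hπ _ ih
  exact h_nonpos_of_mem_Xstar f h mem
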